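/- For every n ≥ 2 and every integer k with ⌈log_3(n/4)⌉ + 3 ≤ k ≤ n + 1, there exist positive integers a_1, a_2, …, a_n such that the palm G = S_n(a_1, a_2, …, a_n) satisfies χ_L(G) = k. -/

import Mathlib

open SimpleGraph

/-- Distance from a vertex to a set of vertices, `d(u,S) = min {d(u,v) : v ∈ S}`. -/
noncomputable def distToSet {V : Type*} (G : SimpleGraph V) (u : V) (S : Set V) : ℕ :=
  sInf (G.dist u '' S)

/-- `c` is a locating coloring of `G` with `k` colors: a proper coloring such that any two
distinct vertices are resolved by some color class. -/
def IsLocatingColoring {V : Type*} (G : SimpleGraph V) {k : ℕ} (c : V → Fin k) : Prop :=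
  (∀ u v : V, G.Adj u v → c u ≠ c v) ∧
  ∀ u v : V, u ≠ v →
    ∃ i : Fin k, distToSet G u (c ⁻¹' {i}) ≠ distToSet G v (c ⁻¹' {i})

/-- The locating chromatic number `χ_L(G)`: the least `k` admitting a locating `k`-coloring. -/
noncomputable def locatingChromaticNumber {V : Type*} (G : SimpleGraph V) : ℕ :=
  sInf {k : ℕ | ∃ c : V → Fin k, IsLocatingColoring G c}

/-- The vertex set of the palm `S_n(a_1, …, a_n)`: a hub `none` and, for each leg
`i : Fin n` (representing leg `i+1`), vertices `j : Fin (a (i+1))`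
(vertex `some ⟨i, j⟩` represents `a_{i+1, j+1}`). -/
def PalmVert (n : ℕ) (a : ℕ → ℕ) : Type :=
  Option ((i : Fin n) × Fin (a ((i : ℕ) + 1)))

/-- The palm `S_n(a_1, …, a_n)`: the star `K_{1,n}` whose `i`-th edge has been subdivided
`a_i - 1` times; the hub is joined to the first vertex of each leg, and consecutive
vertices along a leg are adjacent. -/
def Palm (n : ℕ) (a : ℕ → ℕ) : SimpleGraph (PalmVert n a) :=
  SimpleGraph.fromRel fun u v =>
    match u, v with
    | none, some ⟨_, j⟩ => (j : ℕ) = 0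
    | some ⟨i, j⟩, some ⟨i', j'⟩ => (i : ℕ) = (i' : ℕ) ∧ (j' : ℕ) = (j : ℕ) + 1
    | _, _ => False

section LocatingColoring

variable {V W : Type*}

lemma distToSet_le (G : SimpleGraph V) {u v : V} {S : Set V} (hv : v ∈ S) :
    distToSet G u S ≤ G.dist u v :=
  Nat.sInf_le ⟨v, hv, rfl⟩

lemma le_distToSet (G : SimpleGraph V) {u : V} {S : Set V} {d : ℕ} (hS : S.Nonempty)
    (h : ∀ v ∈ S, d ≤ G.dist u v) : d ≤ distToSet G u S := by
  refine le_csInf (hS.image _) ?_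
  rintro _ ⟨v, hv, rfl⟩
  exact h v hv

lemma distToSet_eq_of_mem (G : SimpleGraph V) {u v : V} {S : Set V} {d : ℕ} (hv : v ∈ S)
    (hd : G.dist u v = d) (h : ∀ w ∈ S, d ≤ G.dist u w) : distToSet G u S = d :=
  le_antisymm (hd ▸ distToSet_le G hv) (le_distToSet G ⟨v, hv⟩ h)

lemma distToSet_eq_zero_of_mem (G : SimpleGraph V) {u : V} {S : Set V} (hu : u ∈ S) :
    distToSet G u S = 0 :=
  distToSet_eq_of_mem G hu dist_self fun _ _ => Nat.zero_le _

/-- A function that vanishes on the diagonal, changes by at most one along edges, and can always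
be decreased along an edge is the graph distance. -/
lemma dist_eq_of_descent (G : SimpleGraph V) (D : V → V → ℕ) (hself : ∀ u, D u u = 0)
    (hlip : ∀ u v w, G.Adj v w → D u w ≤ D u v + 1)
    (hdesc : ∀ u v, u ≠ v → ∃ w, G.Adj w v ∧ D u v = D u w + 1) (u v : V) :
    G.dist u v = D u v := by
  have hwalk : ∀ d : ℕ, ∀ v, D u v = d → ∃ p : G.Walk u v, p.length = d := by
    intro d
    induction d with
    | zero =>
      intro v hv
      by_cases huv : u = v
      · subst huv
        exact ⟨Walk.nil, rfl⟩
      · obtain ⟨w, -, hw⟩ := hdesc u v huv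
        omega
    | succ d ih =>
      intro v hv
      by_cases huv : u = v
      · subst huv
        rw [hself] at hv
        omega
      · obtain ⟨w, hadj, hw⟩ := hdesc u v huv
        obtain ⟨p, hp⟩ := ih w (by omega)
        exact ⟨p.concat hadj, by simp [hp]⟩
  have hle : ∀ x y, ∀ p : G.Walk x y, D u y ≤ D u x + p.length := by
    intro x y p
    induction p with
    | nil => simp
    | cons h p ih =>
      have := hlip u _ _ h
      rw [Walk.length_cons]
      omega
  obtain ⟨p, hp⟩ := hwalk _ v rfl
  obtain ⟨q, hq⟩ := (Walk.reachable p).exists_walk_length_eq_dist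
  have h1 := dist_le p
  have h2 := hle u v q
  rw [hself] at h2
  omega

lemma IsLocatingColoring.castLE {G : SimpleGraph V} {k l : ℕ} (h : k ≤ l) {c : V → Fin k}
    (hc : IsLocatingColoring G c) : IsLocatingColoring G (Fin.castLE h ∘ c) := by
  refine ⟨fun u v huv heq => hc.1 u v huv (Fin.castLE_injective h heq), fun u v huv => ?_⟩
  obtain ⟨i, hi⟩ := hc.2 u v huv
  have hpre : (Fin.castLE h ∘ c) ⁻¹' {Fin.castLE h i} = c ⁻¹' {i} := by
    ext w
    simp
  exact ⟨Fin.castLE h i, by rwa [hpre]⟩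

lemma locatingChromaticNumber_le {G : SimpleGraph V} {k : ℕ} {c : V → Fin k}
    (hc : IsLocatingColoring G c) : locatingChromaticNumber G ≤ k :=
  Nat.sInf_le ⟨c, hc⟩

lemma exists_isLocatingColoring_locatingChromaticNumber {G : SimpleGraph V} {k : ℕ}
    {c : V → Fin k} (hc : IsLocatingColoring G c) :
    ∃ c' : V → Fin (locatingChromaticNumber G), IsLocatingColoring G c' :=
  Nat.sInf_mem (s := {k : ℕ | ∃ c : V → Fin k, IsLocatingColoring G c}) ⟨k, c, hc⟩

/-- Deleting a pendant vertex `x` with neighbor `φ y` increases the number of colors needed by at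
most one: give `y` a fresh color. -/
lemma IsLocatingColoring.exists_of_delete_pendant {G : SimpleGraph V} {H : SimpleGraph W} {k : ℕ}
    {c : V → Fin k} (hc : IsLocatingColoring G c) (φ : W → V) (hinj : Function.Injective φ)
    (hφ : ∀ u v, H.dist u v = G.dist (φ u) (φ v)) (x : V) (hx : ∀ v, v = x ∨ ∃ w, φ w = v)
    (y : W) (hy : ∀ u, G.dist (φ u) x = H.dist u y + 1) :
    ∃ c' : W → Fin (k + 1), IsLocatingColoring H c' := by
  classical
  let c' : W → Fin (k + 1) := fun w => if w = y then Fin.last k else (c (φ w)).castSucc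
  have hlast : c' ⁻¹' {Fin.last k} = {y} := by
    ext w
    by_cases hw : w = y <;> simp [c', hw, Fin.castSucc_ne_last]
  have hcast (i : Fin k) : c' ⁻¹' {i.castSucc} = {w | w ≠ y ∧ c (φ w) = i} := by
    ext w
    by_cases hw : w = y
    · simp [c', hw, (Fin.castSucc_ne_last i).symm]
    · simp [c', hw]
  refine ⟨c', fun u v huv heq => ?_, fun u v huv => ?_⟩
  · have hne : u ≠ v := huv.ne
    by_cases hu : u = y
    · have hv : v ≠ y := fun h => hne (hu.trans h.symm)
      simp only [c', if_pos hu, if_neg hv] at heq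
      exact Fin.castSucc_ne_last _ heq.symm
    · by_cases hv : v = y
      · simp only [c', if_neg hu, if_pos hv] at heq
        exact Fin.castSucc_ne_last _ heq
      · simp only [c', if_neg hu, if_neg hv] at heq
        refine hc.1 (φ u) (φ v) ?_ (Fin.castSucc_injective _ heq)
        rw [← dist_eq_one_iff_adj, ← hφ]
        exact dist_eq_one_iff_adj.2 huv
  · by_cases hd : H.dist u y = H.dist v y
    · obtain ⟨i, hi⟩ := hc.2 (φ u) (φ v) (hinj.ne huv)
      refine ⟨i.castSucc, fun heq => hi ?_⟩
      rw [hcast] at heq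
      set Q : Set V := {w | (w = x ∨ w = φ y) ∧ c w = i} with hQ
      set P : Set W := {w | w ≠ y ∧ c (φ w) = i} with hP
      have hsplit (w : W) :
          G.dist (φ w) '' (c ⁻¹' {i}) = H.dist w '' P ∪ G.dist (φ w) '' Q := by
        have hset : c ⁻¹' {i} = φ '' P ∪ Q := by
          ext z
          simp only [Set.mem_preimage, Set.mem_singleton_iff, Set.mem_union, Set.mem_image, hP, hQ,
            Set.mem_ofPred_eq]
          constructor
          · intro hz
            rcases hx z with rfl | ⟨w, rfl⟩
            · exact Or.inr ⟨Or.inl rfl, hz⟩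
            · by_cases hw : w = y
              · exact Or.inr ⟨Or.inr (by rw [hw]), hz⟩
              · exact Or.inl ⟨w, ⟨hw, hz⟩, rfl⟩
          · rintro (⟨w, ⟨-, hw⟩, rfl⟩ | ⟨-, hz⟩)
            · exact hw
            · exact hz
        rw [hset, Set.image_union, Set.image_image]
        simp only [hφ]
      have hQeq : G.dist (φ u) '' Q = G.dist (φ v) '' Q := by
        refine Set.image_congr ?_
        rintro z ⟨rfl | rfl, -⟩
        · rw [hy, hy, hd]
        · rw [← hφ, ← hφ, hd]
      unfold distToSet at heq ⊢
      rw [hsplit, hsplit, ← hQeq]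
      rcases P.eq_empty_or_nonempty with hPe | hPn
      · simp [hPe]
      rcases Q.eq_empty_or_nonempty with hQe | hQn
      · simpa [hQe] using heq
      · rw [csInf_union (OrderBot.bddBelow _) (hPn.image _) (OrderBot.bddBelow _) (hQn.image _),
          csInf_union (OrderBot.bddBelow _) (hPn.image _) (OrderBot.bddBelow _) (hQn.image _), heq]
    · refine ⟨Fin.last k, ?_⟩
      simpa [hlast, distToSet] using hd

end LocatingColoring

section PalmDistance

variable {n : ℕ} {a : ℕ → ℕ}

/-- The vertex at distance `j + 1` from the hub on leg `i`. -/
def palmLeg (i : Fin n) (j : Fin (a ((i : ℕ) + 1))) : PalmVert n a := some ⟨i, j⟩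

/-- The hub of a palm. -/
def palmHub : PalmVert n a := none

lemma PalmVert.eq_hub_or_leg (u : PalmVert n a) : u = palmHub ∨ ∃ i j, u = palmLeg i j := by
  rcases u with _ | ⟨i, j⟩
  · exact Or.inl rfl
  · exact Or.inr ⟨i, j, rfl⟩

lemma palmHub_ne_palmLeg (i : Fin n) (j : Fin (a ((i : ℕ) + 1))) :
    (palmHub : PalmVert n a) ≠ palmLeg i j :=
  fun h => Option.some_ne_none _ h.symm

lemma palmLeg_congr {i i' : Fin n} {j : Fin (a ((i : ℕ) + 1))} {j' : Fin (a ((i' : ℕ) + 1))}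
    (hi : i = i') (hj : (j : ℕ) = j') : (palmLeg i j : PalmVert n a) = palmLeg i' j' := by
  subst hi
  rw [Fin.ext hj]

lemma palm_adj_hub_leg (i : Fin n) (j : Fin (a ((i : ℕ) + 1))) :
    (Palm n a).Adj palmHub (palmLeg i j) ↔ (j : ℕ) = 0 := by
  refine (fromRel_adj _ _ _).trans ⟨?_, fun h => ⟨palmHub_ne_palmLeg i j, Or.inl h⟩⟩
  rintro ⟨-, h | h⟩
  · exact h
  · exact h.elim

lemma palm_adj_leg_leg (i i' : Fin n) (j : Fin (a ((i : ℕ) + 1)))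
    (j' : Fin (a ((i' : ℕ) + 1))) :
    (Palm n a).Adj (palmLeg i j) (palmLeg i' j') ↔
      i = i' ∧ ((j' : ℕ) = j + 1 ∨ (j : ℕ) = j' + 1) := by
  refine (fromRel_adj _ _ _).trans ⟨?_, ?_⟩
  · rintro ⟨-, ⟨h1, h2⟩ | ⟨h1, h2⟩⟩
    · exact ⟨Fin.ext h1, Or.inl h2⟩
    · exact ⟨Fin.ext h1.symm, Or.inr h2⟩
  · rintro ⟨rfl, h⟩
    refine ⟨fun heq => ?_, h.imp (fun h => ⟨rfl, h⟩) fun h => ⟨rfl, h⟩⟩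
    have := Option.some.inj heq
    simp only [Sigma.mk.injEq, heq_eq_eq, true_and] at this
    rw [this] at h
    omega

/-- The explicit distance function of a palm. -/
def palmDist : PalmVert n a → PalmVert n a → ℕ
  | none, none => 0
  | none, some y => y.2 + 1
  | some x, none => x.2 + 1
  | some x, some y => if x.1 = y.1 then (x.2 - y.2 : ℕ) + (y.2 - x.2 : ℕ) else x.2 + y.2 + 2

lemma palmDist_hub_hub : palmDist (palmHub : PalmVert n a) palmHub = 0 := rfl

lemma palmDist_hub_leg (i : Fin n) (j : Fin (a ((i : ℕ) + 1))) :
    palmDist palmHub (palmLeg i j) = j + 1 := rfl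

lemma palmDist_leg_hub (i : Fin n) (j : Fin (a ((i : ℕ) + 1))) :
    palmDist (palmLeg i j) palmHub = j + 1 := rfl

lemma palmDist_leg_leg (i i' : Fin n) (j : Fin (a ((i : ℕ) + 1)))
    (j' : Fin (a ((i' : ℕ) + 1))) :
    palmDist (palmLeg i j) (palmLeg i' j') =
      if i = i' then (j - j' : ℕ) + (j' - j : ℕ) else j + j' + 2 := rfl

lemma palm_dist (u v : PalmVert n a) : (Palm n a).dist u v = palmDist u v := by
  refine dist_eq_of_descent _ _ ?_ ?_ ?_ u v
  · intro u
    rcases u.eq_hub_or_leg with rfl | ⟨i, j, rfl⟩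
    · rfl
    · simp [palmDist_leg_leg]
  · intro u v w h
    rcases u.eq_hub_or_leg with rfl | ⟨i, j, rfl⟩ <;>
    rcases v.eq_hub_or_leg with rfl | ⟨i', j', rfl⟩ <;>
    rcases w.eq_hub_or_leg with rfl | ⟨i'', j'', rfl⟩ <;>
    simp only [SimpleGraph.irrefl, palm_adj_hub_leg, palm_adj_leg_leg,
      (Palm n a).adj_comm (palmLeg _ _) palmHub] at h <;>
    simp only [palmDist_hub_hub, palmDist_hub_leg, palmDist_leg_hub, palmDist_leg_leg] <;>
    grind
  · intro u v huv
    rcases v.eq_hub_or_leg with rfl | ⟨i', j', rfl⟩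
    · rcases u.eq_hub_or_leg with rfl | ⟨i, j, rfl⟩
      · exact absurd rfl huv
      · refine ⟨palmLeg i ⟨0, j.pos⟩, ?_, ?_⟩
        · rw [adj_comm, palm_adj_hub_leg]
        · simp [palmDist_leg_hub, palmDist_leg_leg]
    · by_cases hout : ∃ j, u = palmLeg i' j ∧ (j' : ℕ) < j
      · obtain ⟨j, rfl, hj⟩ := hout
        refine ⟨palmLeg i' ⟨j' + 1, by omega⟩, ?_, ?_⟩
        · simp [palm_adj_leg_leg]
        · simp only [palmDist_leg_leg, if_true]
          omega
      · by_cases hj' : (j' : ℕ) = 0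
        · refine ⟨palmHub, (palm_adj_hub_leg _ _).2 hj', ?_⟩
          rcases u.eq_hub_or_leg with rfl | ⟨i, j, rfl⟩
          · simp [palmDist_hub_hub, palmDist_hub_leg, hj']
          · rw [palmDist_leg_leg, palmDist_leg_hub, if_neg]
            · omega
            · rintro rfl
              refine hout ⟨j, rfl, ?_⟩
              have : (j : ℕ) ≠ j' := fun h => huv (palmLeg_congr rfl h)
              omega
        · refine ⟨palmLeg i' ⟨j' - 1, by omega⟩, ?_, ?_⟩
          · simp only [palm_adj_leg_leg, true_and]
            omega
          · rcases u.eq_hub_or_leg with rfl | ⟨i, j, rfl⟩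
            · simp only [palmDist_hub_leg]
              omega
            · simp only [palmDist_leg_leg]
              by_cases hi : i = i'
              · subst hi
                have : (j : ℕ) ≠ j' := fun h => huv (palmLeg_congr rfl h)
                have : ¬ (j' : ℕ) < j := fun h => hout ⟨j, rfl, h⟩
                simp only [if_true]
                omega
              · simp only [if_neg hi]
                omega

lemma palm_dist_ne_zero {u v : PalmVert n a} (h : u ≠ v) : (Palm n a).dist u v ≠ 0 := by
  rw [palm_dist]
  rcases u.eq_hub_or_leg with rfl | ⟨i, j, rfl⟩ <;>
  rcases v.eq_hub_or_leg with rfl | ⟨i', j', rfl⟩ <;>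
  simp only [palmDist_hub_hub, palmDist_hub_leg, palmDist_leg_hub, palmDist_leg_leg]
  · exact absurd rfl h
  · omega
  · omega
  · split_ifs with hi
    · subst hi
      have : (j : ℕ) ≠ j' := fun hj => h (palmLeg_congr rfl hj)
      omega
    · omega

end PalmDistance

section PalmDescent

variable {n : ℕ} {a b : ℕ → ℕ}

/-- Shortening one leg of a palm by one vertex increases the number of colors by at most one. -/
lemma exists_isLocatingColoring_shorten {k : ℕ} {c : PalmVert n a → Fin k}
    (hc : IsLocatingColoring (Palm n a) c) (r : Fin n) (hr : a (r + 1) = b (r + 1) + 1)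
    (hpos : 1 ≤ b (r + 1)) (hb : ∀ i, i ≠ (r : ℕ) + 1 → b i = a i) :
    ∃ c' : PalmVert n b → Fin (k + 1), IsLocatingColoring (Palm n b) c' := by
  have hle : ∀ i, b i ≤ a i := fun i => by
    by_cases hi : i = (r : ℕ) + 1
    · subst hi
      omega
    · exact (hb i hi).le
  let φ : PalmVert n b → PalmVert n a := fun u =>
    match u with
    | none => palmHub
    | some ⟨i, j⟩ => palmLeg i (Fin.castLE (hle _) j)
  have hφhub : φ palmHub = palmHub := rfl
  have hφleg (i : Fin n) (j : Fin (b ((i : ℕ) + 1))) :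
      φ (palmLeg i j) = palmLeg i (Fin.castLE (hle _) j) := rfl
  have hφ (u v) : (Palm n b).dist u v = (Palm n a).dist (φ u) (φ v) := by
    rw [palm_dist, palm_dist]
    rcases u.eq_hub_or_leg with rfl | ⟨i, j, rfl⟩ <;>
    rcases v.eq_hub_or_leg with rfl | ⟨i', j', rfl⟩ <;> rfl
  refine hc.exists_of_delete_pendant φ ?_ hφ (palmLeg r ⟨b (r + 1), by omega⟩) ?_
    (palmLeg r ⟨b (r + 1) - 1, by omega⟩) ?_
  · intro u v huv
    by_contra hne
    exact palm_dist_ne_zero hne (by rw [hφ, huv, dist_self])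
  · intro v
    rcases v.eq_hub_or_leg with rfl | ⟨i, j, rfl⟩
    · exact Or.inr ⟨palmHub, hφhub⟩
    · by_cases hj : (j : ℕ) < b (i + 1)
      · exact Or.inr ⟨palmLeg i ⟨j, hj⟩, hφleg _ _⟩
      · left
        have hi : i = r := by
          by_contra hi
          have := hb (i + 1) fun h => hi (Fin.ext (by omega))
          omega
        subst hi
        exact palmLeg_congr rfl (by dsimp only; omega)
  · intro u
    rw [palm_dist, palm_dist]
    rcases u.eq_hub_or_leg with rfl | ⟨i, j, rfl⟩
    · rw [hφhub, palmDist_hub_leg, palmDist_hub_leg]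
      dsimp only
      omega
    · rw [hφleg, palmDist_leg_leg, palmDist_leg_leg]
      by_cases hi : i = r
      · subst hi
        simp only [if_true, Fin.val_castLE]
        omega
      · simp only [if_neg hi, Fin.val_castLE]
        omega

/-- A locating coloring of a star is injective. -/
lemma lt_of_isLocatingColoring_star (ha : ∀ i : Fin n, a (i + 1) = 1) {k : ℕ}
    {c : PalmVert n a → Fin k} (hc : IsLocatingColoring (Palm n a) c) : n + 1 ≤ k := by
  let f : Option (Fin n) → PalmVert n a := fun x =>
    match x with
    | none => palmHub
    | some i => palmLeg i ⟨0, by rw [ha]; exact one_pos⟩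
  have hinj : Function.Injective (c ∘ f) := by
    have hadj (i : Fin n) : c palmHub ≠ c (f (some i)) :=
      hc.1 _ _ ((palm_adj_hub_leg _ _).2 rfl)
    rintro (_ | i) (_ | i') h
    · rfl
    · exact absurd h (hadj i')
    · exact absurd h.symm (hadj i)
    · by_contra hne
      have hii' : i ≠ i' := fun h => hne (by rw [h])
      have hfne : f (some i) ≠ f (some i') := by
        intro h
        have h2 : palmDist (f (some i)) (f (some i')) = 0 := by
          rw [← palm_dist, h, dist_self]
        simp [f, palmDist_leg_leg, hii'] at h2
      obtain ⟨l, hl⟩ := hc.2 _ _ hfne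
      have h : c (f (some i)) = c (f (some i')) := h
      by_cases hcl : c (f (some i)) = l
      · refine hl ?_
        rw [distToSet_eq_zero_of_mem _ (show f (some i) ∈ c ⁻¹' {l} from hcl),
          distToSet_eq_zero_of_mem _ (show f (some i') ∈ c ⁻¹' {l} from h.symm.trans hcl)]
      · refine hl (congrArg sInf (Set.image_congr fun w hw => ?_))
        rw [palm_dist, palm_dist]
        rcases w.eq_hub_or_leg with rfl | ⟨i'', j'', rfl⟩
        · rfl
        · have hj : (j'' : ℕ) = 0 := by
            have := j''.2
            have := ha i''
            omega
          have h1 : i ≠ i'' := by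
            rintro rfl
            exact hcl ((congrArg c (palmLeg_congr rfl hj.symm)).trans hw)
          have h2 : i' ≠ i'' := by
            rintro rfl
            exact hcl (h.trans ((congrArg c (palmLeg_congr rfl hj.symm)).trans hw))
          simp only [f, palmDist_leg_leg, if_neg h1, if_neg h2]
  simpa using Fintype.card_le_of_injective _ hinj

/-- Shortening the legs one vertex at a time, the locating chromatic number of a palm attains every
value up to that of a star. -/
lemma exists_locatingChromaticNumber_eq_of_isLocatingColoring {k : ℕ} (hk : k ≤ n + 1) (s : ℕ)
    (a : ℕ → ℕ) (hs : ∑ i : Fin n, a (i + 1) = s) (ha : ∀ i, 1 ≤ i → i ≤ n → 1 ≤ a i)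
    {c : PalmVert n a → Fin k} (hc : IsLocatingColoring (Palm n a) c) :
    ∃ a : ℕ → ℕ, (∀ i, 1 ≤ i → i ≤ n → 1 ≤ a i) ∧ locatingChromaticNumber (Palm n a) = k := by
  induction s using Nat.strong_induction_on generalizing a with
  | _ s ih =>
    obtain ⟨c₀, hc₀⟩ := exists_isLocatingColoring_locatingChromaticNumber hc
    rcases (locatingChromaticNumber_le hc).eq_or_lt with heq | hlt
    · exact ⟨a, ha, heq⟩
    by_cases hone : ∀ i : Fin n, a (i + 1) = 1
    · have := lt_of_isLocatingColoring_star hone hc₀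
      omega
    · push Not at hone
      obtain ⟨r, hr⟩ := hone
      have hr1 := ha (r + 1) (by omega) (by omega)
      let b := Function.update a (r + 1) (a (r + 1) - 1)
      have hbr : b (r + 1) = a (r + 1) - 1 := Function.update_self ..
      have hb (i) (hi : i ≠ (r : ℕ) + 1) : b i = a i := Function.update_of_ne hi ..
      obtain ⟨c₁, hc₁⟩ := exists_isLocatingColoring_shorten hc₀ r (b := b) (by omega) (by omega) hb
      refine ih (∑ i : Fin n, b (i + 1)) ?_ b rfl ?_ (hc₁.castLE hlt)
      · rw [← hs]
        refine Finset.sum_lt_sum (fun i _ => ?_) ⟨r, Finset.mem_univ _, by omega⟩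
        by_cases hi : (i : ℕ) + 1 = r + 1
        · rw [hi]
          omega
        · exact (hb _ hi).le
      · intro i h1 h2
        by_cases hi : i = (r : ℕ) + 1
        · subst hi
          omega
        · rw [hb i hi]
          exact ha i h1 h2

end PalmDescent

section PalmColoring

/-- The ternary digit of the leg index `l` that is recorded by the color `q + 2`. -/
def legDigit (l q : ℕ) : ℕ := l / 4 / 3 ^ (q - 1) % 3

/-- The vertex of leg `l` at distance `p` from the hub carries a color outside `{0, 1, 2}`: the
digit `legDigit l q` is `0` or `1` when the color `q + 2` appears at distance `4 * q` or
`4 * q + 1`, and `2` when this color does not appear on leg `l`. -/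
def IsMarked (l p : ℕ) : Prop := 4 ≤ p ∧ p % 4 = legDigit l (p / 4) ∧ p % 4 < 2

instance (l p : ℕ) : Decidable (IsMarked l p) := by
  unfold IsMarked
  infer_instance

/-- The underlying alternating coloring of leg `l`, with the color pattern `10…`, `20…`, `12…` or
`21…` according to `l % 4`. -/
def baseColor (l p : ℕ) : ℕ :=
  if l % 4 = 0 then p % 2
  else if l % 4 = 1 then 2 * (p % 2)
  else if l % 4 = 2 then 2 - p % 2
  else 1 + p % 2

/-- The color from `{0, 1, 2}` that is not used by `baseColor l`. -/
def farColor (l : ℕ) : ℕ := if l % 4 = 0 then 2 else if l % 4 = 1 then 1 else 0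

/-- The color of the vertex of leg `l` at distance `p` from the hub. -/
def legColor (l p : ℕ) : ℕ := if IsMarked l p then p / 4 + 2 else baseColor l p

lemma IsMarked.four_le {l p : ℕ} (h : IsMarked l p) : 4 ≤ p := h.1

lemma IsMarked.not_isMarked {l p p' : ℕ} (h : IsMarked l p) (hne : p ≠ p') (h1 : p ≤ p' + 2)
    (h2 : p' ≤ p + 2) : ¬ IsMarked l p' := by
  rintro ⟨h3, h4, h5⟩
  obtain ⟨h6, h7, h8⟩ := h
  have hq : p / 4 = p' / 4 := by omega
  rw [hq] at h7
  omega

lemma baseColor_le (l p : ℕ) : baseColor l p ≤ 2 := by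
  unfold baseColor
  split_ifs <;> omega

lemma baseColor_succ_ne (l p : ℕ) : baseColor l (p + 1) ≠ baseColor l p := by
  unfold baseColor
  split_ifs <;> omega

lemma baseColor_add_two (l p : ℕ) : baseColor l (p + 2) = baseColor l p := by
  simp [baseColor]

lemma baseColor_ne_farColor (l p : ℕ) : baseColor l p ≠ farColor l := by
  unfold baseColor farColor
  split_ifs <;> omega

lemma farColor_le (l : ℕ) : farColor l ≤ 2 := by
  unfold farColor
  split_ifs <;> omega

lemma legColor_of_isMarked {l p : ℕ} (h : IsMarked l p) : legColor l p = p / 4 + 2 := if_pos h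

lemma legColor_of_not_isMarked {l p : ℕ} (h : ¬ IsMarked l p) : legColor l p = baseColor l p :=
  if_neg h

lemma three_le_legColor {l p : ℕ} (h : IsMarked l p) : 3 ≤ legColor l p := by
  have := h.four_le
  rw [legColor_of_isMarked h]
  omega

lemma isMarked_of_legColor_eq {l p q : ℕ} (hq : 1 ≤ q) (h : legColor l p = q + 2) :
    IsMarked l p ∧ p / 4 = q := by
  by_cases hm : IsMarked l p
  · rw [legColor_of_isMarked hm] at h
    exact ⟨hm, by omega⟩
  · rw [legColor_of_not_isMarked hm] at h
    have := baseColor_le l p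
    omega

lemma legColor_succ_ne (l p : ℕ) : legColor l (p + 1) ≠ legColor l p := by
  have h0 := baseColor_le l p
  have h1 := baseColor_le l (p + 1)
  by_cases hp : IsMarked l p
  · have hp1 := hp.not_isMarked (p' := p + 1) (by omega) (by omega) (by omega)
    have := three_le_legColor hp
    rw [legColor_of_not_isMarked hp1]
    omega
  · by_cases hp1 : IsMarked l (p + 1)
    · have := three_le_legColor hp1
      rw [legColor_of_not_isMarked hp]
      omega
    · rw [legColor_of_not_isMarked hp, legColor_of_not_isMarked hp1]
      exact baseColor_succ_ne l p

lemma legDigit_lt (l q : ℕ) : legDigit l q < 3 := Nat.mod_lt _ (by norm_num)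

lemma exists_legDigit_ne {m l l' : ℕ} (hl : l < 4 * 3 ^ m) (hl' : l' < 4 * 3 ^ m)
    (hmod : l % 4 = l' % 4) (hne : l ≠ l') :
    ∃ q, 1 ≤ q ∧ q ≤ m ∧ legDigit l q ≠ legDigit l' q := by
  by_contra! h
  have hpow : ∀ r, r ≤ m → l / 4 % 3 ^ r = l' / 4 % 3 ^ r := by
    intro r
    induction r with
    | zero => simp [Nat.mod_one]
    | succ r ih =>
      intro hr
      have hd : l / 4 / 3 ^ r % 3 = l' / 4 / 3 ^ r % 3 := h (r + 1) (by omega) hr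
      rw [Nat.mod_pow_succ, Nat.mod_pow_succ, ih (by omega), hd]
  have := hpow m le_rfl
  rw [Nat.mod_eq_of_lt (by omega), Nat.mod_eq_of_lt (by omega)] at this
  omega

variable {n m : ℕ}

/-- The coloring of the palm with `n` legs of length `4 * m + 3`, with values in `ℕ`. -/
def palmColor : PalmVert n (fun _ => 4 * m + 3) → ℕ
  | none => 0
  | some x => legColor x.1 (x.2 + 1)

lemma palmColor_hub : palmColor (palmHub : PalmVert n fun _ => 4 * m + 3) = 0 := rfl

lemma palmColor_leg (i : Fin n) (j : Fin (4 * m + 3)) :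
    palmColor (palmLeg i j : PalmVert n fun _ => 4 * m + 3) = legColor i (j + 1) := rfl

lemma palmColor_lt (u : PalmVert n fun _ => 4 * m + 3) : palmColor u < m + 3 := by
  rcases u.eq_hub_or_leg with rfl | ⟨i, j, rfl⟩
  · rw [palmColor_hub]
    omega
  · rw [palmColor_leg]
    have := j.2
    by_cases h : IsMarked i (j + 1)
    · rw [legColor_of_isMarked h]
      omega
    · rw [legColor_of_not_isMarked h]
      have := baseColor_le i (j + 1)
      omega

/-- The distance from `u` to the vertices of color `x`. -/
noncomputable def palmColorDist (u : PalmVert n fun _ => 4 * m + 3) (x : ℕ) : ℕ :=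
  distToSet (Palm n fun _ => 4 * m + 3) u {v | palmColor v = x}

lemma palmColorDist_eq {u : PalmVert n fun _ => 4 * m + 3} {x d : ℕ}
    (v : PalmVert n fun _ => 4 * m + 3) (hv : palmColor v = x) (hd : palmDist u v = d)
    (h : ∀ w, palmColor w = x → d ≤ palmDist u w) : palmColorDist u x = d :=
  distToSet_eq_of_mem _ (S := {v | palmColor v = x}) hv (by rw [palm_dist, hd]) fun w hw => by
    rw [palm_dist]
    exact h w hw

lemma one_le_palmDist {u w : PalmVert n fun _ => 4 * m + 3} (h : palmColor w ≠ palmColor u) :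
    1 ≤ palmDist u w := by
  rw [← palm_dist]
  exact Nat.one_le_iff_ne_zero.2 (palm_dist_ne_zero fun huw => h (by rw [huw]))

lemma palmColorDist_hub_zero :
    palmColorDist (palmHub : PalmVert n fun _ => 4 * m + 3) 0 = 0 :=
  palmColorDist_eq palmHub palmColor_hub palmDist_hub_hub fun _ _ => Nat.zero_le _

lemma palmColor_leg_zero (i : Fin n) :
    palmColor (palmLeg i 0 : PalmVert n fun _ => 4 * m + 3) = baseColor i 1 := by
  rw [palmColor_leg]
  exact legColor_of_not_isMarked fun h => absurd h.four_le (by simp)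

lemma palmColorDist_hub (i : Fin n) (hi : baseColor i 1 ≠ 0) :
    palmColorDist (palmHub : PalmVert n fun _ => 4 * m + 3) (baseColor i 1) = 1 := by
  refine palmColorDist_eq (palmLeg i 0) (palmColor_leg_zero i) rfl fun w hw => one_le_palmDist ?_
  rw [hw, palmColor_hub]
  exact hi

lemma palmColorDist_baseColor_succ (i : Fin n) (j : Fin (4 * m + 3)) :
    palmColorDist (palmLeg i j : PalmVert n fun _ => 4 * m + 3) (baseColor i (j + 2)) = 1 := by
  have hj := j.2
  have hlow : ∀ w : PalmVert n fun _ => 4 * m + 3, palmColor w = baseColor i (j + 2) →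
      1 ≤ palmDist (palmLeg i j) w := by
    intro w hw
    apply one_le_palmDist
    rw [hw, palmColor_leg]
    by_cases h : IsMarked i (j + 1)
    · have := three_le_legColor h
      have := baseColor_le i (j + 2)
      omega
    · rw [legColor_of_not_isMarked h]
      exact baseColor_succ_ne i (j + 1)
  by_cases hprev : 1 ≤ (j : ℕ) ∧ ¬ IsMarked i j
  · refine palmColorDist_eq (palmLeg i ⟨j - 1, by omega⟩) ?_ ?_ hlow
    · rw [palmColor_leg]
      dsimp only
      rw [Nat.sub_add_cancel hprev.1, legColor_of_not_isMarked hprev.2, baseColor_add_two]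
    · rw [palmDist_leg_leg, if_pos rfl]
      dsimp only
      omega
  · have hnext : (j : ℕ) + 1 < 4 * m + 3 ∧ ¬ IsMarked i (j + 2) := by
      by_cases h : IsMarked i j
      · refine ⟨?_, h.not_isMarked (by omega) (by omega) (by omega)⟩
        have := h.2.2
        omega
      · have hj0 : (j : ℕ) = 0 := by
          by_contra h0
          exact hprev ⟨by omega, h⟩
        refine ⟨by omega, fun h => ?_⟩
        have := h.four_le
        omega
    refine palmColorDist_eq (palmLeg i ⟨j + 1, hnext.1⟩) ?_ ?_ hlow
    · exact legColor_of_not_isMarked hnext.2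
    · rw [palmDist_leg_leg, if_pos rfl]
      dsimp only
      omega

lemma palmColorDist_baseColor (i : Fin n) (j : Fin (4 * m + 3)) :
    palmColorDist (palmLeg i j : PalmVert n fun _ => 4 * m + 3) (baseColor i (j + 1)) =
      if IsMarked i (j + 1) then 2 else 0 := by
  have hj := j.2
  split_ifs with h
  · have h4 := h.four_le
    refine palmColorDist_eq (palmLeg i ⟨j - 2, by omega⟩) ?_ ?_ ?_
    · rw [palmColor_leg]
      dsimp only
      rw [legColor_of_not_isMarked (h.not_isMarked (by omega) (by omega) (by omega)),
        ← baseColor_add_two]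
      congr 1
      omega
    · rw [palmDist_leg_leg, if_pos rfl]
      dsimp only
      omega
    · intro w hw
      rcases w.eq_hub_or_leg with rfl | ⟨i', j', rfl⟩
      · rw [palmDist_leg_hub]
        omega
      · rw [palmDist_leg_leg]
        split_ifs with hi
        · subst hi
          rw [palmColor_leg] at hw
          by_contra! hlt
          have hcases : (j' : ℕ) = j ∨ (j' : ℕ) = j + 1 ∨ (j : ℕ) = j' + 1 := by omega
          rcases hcases with hjj | hjj | hjj
          · rw [hjj] at hw
            have := three_le_legColor h
            have := baseColor_le i (j + 1)
            omega
          · rw [hjj, legColor_of_not_isMarked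
              (h.not_isMarked (by omega) (by omega) (by omega))] at hw
            exact baseColor_succ_ne _ _ hw
          · rw [hjj, legColor_of_not_isMarked
              (h.not_isMarked (by omega) (by omega) (by omega))] at hw
            exact baseColor_succ_ne _ _ hw.symm
        · omega
  · exact palmColorDist_eq (palmLeg i j) (legColor_of_not_isMarked h)
      (by simp [palmDist_leg_leg]) fun _ _ => Nat.zero_le _

lemma palmColorDist_farColor (hn : 2 ≤ n) (i : Fin n) (j : Fin (4 * m + 3)) :
    palmColorDist (palmLeg i j : PalmVert n fun _ => 4 * m + 3) (farColor i) =
      if (i : ℕ) % 4 < 2 then (j : ℕ) + 2 else j + 1 := by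
  have hleg (i' : Fin n) (j' : Fin (4 * m + 3))
      (h : palmColor (palmLeg i' j' : PalmVert n fun _ => 4 * m + 3) = farColor i) :
      (j : ℕ) + 2 ≤
        palmDist (palmLeg i j : PalmVert n fun _ => 4 * m + 3) (palmLeg i' j') := by
    rw [palmDist_leg_leg, if_neg]
    · omega
    · rintro rfl
      rw [palmColor_leg] at h
      by_cases hm : IsMarked i (j' + 1)
      · have := three_le_legColor hm
        have := farColor_le i
        omega
      · rw [legColor_of_not_isMarked hm] at h
        exact baseColor_ne_farColor _ _ h
  split_ifs with hi
  · have hwit (i' : Fin n) (hii' : i ≠ i') (hcol : baseColor i' 1 = farColor i) :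
        palmColorDist (palmLeg i j : PalmVert n fun _ => 4 * m + 3) (farColor i) = j + 2 := by
      refine palmColorDist_eq (palmLeg i' 0) ((palmColor_leg_zero i').trans hcol) ?_ ?_
      · rw [palmDist_leg_leg, if_neg hii']
        rfl
      · intro w hw
        rcases w.eq_hub_or_leg with rfl | ⟨i', j', rfl⟩
        · rw [palmColor_hub, farColor] at hw
          split_ifs at hw
          omega
        · exact hleg i' j' hw
    by_cases h0 : (i : ℕ) % 4 = 0
    · refine hwit ⟨1, by omega⟩ (fun h => ?_) (by simp [baseColor, farColor, h0])
      simp [h] at h0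
    · have h1 : (i : ℕ) % 4 = 1 := by omega
      refine hwit ⟨0, by omega⟩ (fun h => ?_) (by simp [baseColor, farColor, h1])
      simp [h] at h1
  · have hfar : farColor i = 0 := by
      unfold farColor
      rw [if_neg (by omega), if_neg (by omega)]
    refine palmColorDist_eq palmHub (palmColor_hub.trans hfar.symm) (palmDist_leg_hub _ _) ?_
    intro w hw
    rcases w.eq_hub_or_leg with rfl | ⟨i', j', rfl⟩
    · rw [palmDist_leg_hub]
    · exact (Nat.le_succ _).trans (hleg _ _ hw)

/-- The distances from a vertex on a leg to the color classes `0`, `1` and `2`. -/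
lemma palmColorDist_leg (hn : 2 ≤ n) (i : Fin n) (j : Fin (4 * m + 3)) :
    ∃ μ : ℕ, (μ = 0 ∨ μ = 2 ∧ 3 ≤ (j : ℕ)) ∧
      palmColorDist (palmLeg i j : PalmVert n fun _ => 4 * m + 3) 0 =
        (if (i : ℕ) % 4 < 2 then if (j : ℕ) % 2 = 0 then 1 else μ else j + 1) ∧
      palmColorDist (palmLeg i j : PalmVert n fun _ => 4 * m + 3) 1 =
        (if (i : ℕ) % 4 = 1 then (j : ℕ) + 2 else
          if (i : ℕ) % 4 = 3 ↔ (j : ℕ) % 2 = 0 then 1 else μ) ∧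
      palmColorDist (palmLeg i j : PalmVert n fun _ => 4 * m + 3) 2 =
        (if (i : ℕ) % 4 = 0 then (j : ℕ) + 2 else
          if (i : ℕ) % 4 = 2 ↔ (j : ℕ) % 2 = 0 then 1 else μ) := by
  refine ⟨if IsMarked i (j + 1) then 2 else 0, ?_, ?_⟩
  · split_ifs with h
    · have := h.four_le
      omega
    · omega
  · rw [← palmColorDist_baseColor i j]
    have h1 := palmColorDist_baseColor_succ i j
    have h2 := palmColorDist_farColor hn i j
    have ht : (i : ℕ) % 4 = 0 ∨ (i : ℕ) % 4 = 1 ∨ (i : ℕ) % 4 = 2 ∨ (i : ℕ) % 4 = 3 := by omega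
    rcases ht with ht | ht | ht | ht <;> rcases Nat.mod_two_eq_zero_or_one j with hj | hj <;>
      simp_all [baseColor, farColor, Nat.add_mod]

lemma palmColorDist_of_legDigit_lt (i : Fin n) (j : Fin (4 * m + 3)) {q : ℕ} (hq : 1 ≤ q)
    (hqm : q ≤ m) (hd : legDigit i q < 2) :
    palmColorDist (palmLeg i j : PalmVert n fun _ => 4 * m + 3) (q + 2) =
      (j + 1 - (4 * q + legDigit i q)) + (4 * q + legDigit i q - (j + 1)) := by
  have hdiv : (4 * q + legDigit i q) / 4 = q := by omega
  have hmark : IsMarked i (4 * q + legDigit i q) := by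
    refine ⟨by omega, ?_, by omega⟩
    rw [hdiv]
    omega
  refine palmColorDist_eq (palmLeg i ⟨4 * q + legDigit i q - 1, by omega⟩) ?_ ?_ ?_
  · rw [palmColor_leg]
    dsimp only
    rw [Nat.sub_add_cancel (by omega), legColor_of_isMarked hmark, hdiv]
  · rw [palmDist_leg_leg, if_pos rfl]
    dsimp only
    omega
  · intro w hw
    rcases w.eq_hub_or_leg with rfl | ⟨i', j', rfl⟩
    · rw [palmColor_hub] at hw
      omega
    · rw [palmColor_leg] at hw
      obtain ⟨⟨h1, h2, h3⟩, h4⟩ := isMarked_of_legColor_eq hq hw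
      rw [palmDist_leg_leg]
      split_ifs with hi
      · subst hi
        rw [h4] at h2
        omega
      · omega

lemma le_palmColorDist_of_legDigit_eq_two (i i' : Fin n) (j : Fin (4 * m + 3)) {q : ℕ}
    (hq : 1 ≤ q) (hqm : q ≤ m) (hd : legDigit i q = 2) (hd' : legDigit i' q < 2) :
    j + 1 + 4 * q ≤ palmColorDist (palmLeg i j : PalmVert n fun _ => 4 * m + 3) (q + 2) := by
  have hdiv : (4 * q + legDigit i' q) / 4 = q := by omega
  have hmark : IsMarked i' (4 * q + legDigit i' q) := by
    refine ⟨by omega, ?_, by omega⟩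
    rw [hdiv]
    omega
  refine le_distToSet _ ⟨palmLeg i' ⟨4 * q + legDigit i' q - 1, by omega⟩, ?_⟩ fun w hw => ?_
  · change palmColor _ = _
    rw [palmColor_leg]
    dsimp only
    rw [Nat.sub_add_cancel (by omega), legColor_of_isMarked hmark, hdiv]
  · replace hw : palmColor w = q + 2 := hw
    rw [palm_dist]
    rcases w.eq_hub_or_leg with rfl | ⟨i'', j'', rfl⟩
    · rw [palmColor_hub] at hw
      omega
    · rw [palmColor_leg] at hw
      obtain ⟨⟨h1, h2, h3⟩, h4⟩ := isMarked_of_legColor_eq hq hw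
      rw [palmDist_leg_leg]
      split_ifs with hi
      · subst hi
        rw [h4] at h2
        omega
      · omega

lemma palmColorDist_ne_of_legDigit_ne (i i' : Fin n) (j : Fin (4 * m + 3)) {q : ℕ}
    (hq : 1 ≤ q) (hqm : q ≤ m) (hd : legDigit i q ≠ legDigit i' q) :
    palmColorDist (palmLeg i j : PalmVert n fun _ => 4 * m + 3) (q + 2) ≠
      palmColorDist (palmLeg i' j) (q + 2) := by
  have hi := legDigit_lt i q
  have hi' := legDigit_lt i' q
  by_cases h : legDigit i q < 2
  · have h1 := palmColorDist_of_legDigit_lt i j hq hqm h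
    by_cases h' : legDigit i' q < 2
    · have h2 := palmColorDist_of_legDigit_lt i' j hq hqm h'
      omega
    · have h2 := le_palmColorDist_of_legDigit_eq_two i' i j hq hqm (by omega) h
      omega
  · have h1 := palmColorDist_of_legDigit_lt i' j hq hqm (by omega)
    have h2 := le_palmColorDist_of_legDigit_eq_two i i' j hq hqm (by omega) (by omega)
    omega

/-- The distances to the color classes `0`, `1` and `2` computed in `palmColorDist_leg` determine
the type of the leg and the position on it. -/
lemma eq_of_distance_profile_eq {t t' j j' μ μ' : ℕ} (ht : t < 4) (ht' : t' < 4)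
    (hμ : μ = 0 ∨ μ = 2 ∧ 3 ≤ j) (hμ' : μ' = 0 ∨ μ' = 2 ∧ 3 ≤ j')
    (h0 : (if t < 2 then if j % 2 = 0 then 1 else μ else j + 1) =
      if t' < 2 then if j' % 2 = 0 then 1 else μ' else j' + 1)
    (h1 : (if t = 1 then j + 2 else if t = 3 ↔ j % 2 = 0 then 1 else μ) =
      if t' = 1 then j' + 2 else if t' = 3 ↔ j' % 2 = 0 then 1 else μ')
    (h2 : (if t = 0 then j + 2 else if t = 2 ↔ j % 2 = 0 then 1 else μ) =
      if t' = 0 then j' + 2 else if t' = 2 ↔ j' % 2 = 0 then 1 else μ') :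
    t = t' ∧ j = j' := by
  interval_cases t <;> interval_cases t' <;> simp at h0 h1 h2 <;> grind

lemma eq_of_palmColorDist_eq (hn : 2 ≤ n) (hnm : n ≤ 4 * 3 ^ m)
    {u v : PalmVert n fun _ => 4 * m + 3}
    (h : ∀ x < m + 3, palmColorDist u x = palmColorDist v x) : u = v := by
  have hub0 := palmColorDist_hub_zero (n := n) (m := m)
  have hub1 : palmColorDist (palmHub : PalmVert n fun _ => 4 * m + 3) 1 = 1 :=
    palmColorDist_hub ⟨0, by omega⟩ (by simp [baseColor])
  have hub2 : palmColorDist (palmHub : PalmVert n fun _ => 4 * m + 3) 2 = 1 :=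
    palmColorDist_hub ⟨1, by omega⟩ (by simp [baseColor])
  have h0 := h 0 (by omega)
  have h1 := h 1 (by omega)
  have h2 := h 2 (by omega)
  rcases u.eq_hub_or_leg with rfl | ⟨i, j, rfl⟩ <;>
  rcases v.eq_hub_or_leg with rfl | ⟨i', j', rfl⟩
  · rfl
  · obtain ⟨μ, hμ, h3, h4, h5⟩ := palmColorDist_leg hn i' j'
    grind
  · obtain ⟨μ, hμ, h3, h4, h5⟩ := palmColorDist_leg hn i j
    grind
  · have hmod : (i : ℕ) % 4 = i' % 4 ∧ (j : ℕ) = j' := by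
      obtain ⟨μ, hμ, h3, h4, h5⟩ := palmColorDist_leg hn i j
      obtain ⟨μ', hμ', h3', h4', h5'⟩ := palmColorDist_leg hn i' j'
      rw [h3, h3'] at h0
      rw [h4, h4'] at h1
      rw [h5, h5'] at h2
      exact eq_of_distance_profile_eq (Nat.mod_lt _ four_pos) (Nat.mod_lt _ four_pos) hμ hμ'
        h0 h1 h2
    obtain rfl : j = j' := Fin.ext hmod.2
    by_cases hii' : i = i'
    · rw [hii']
    · obtain ⟨q, hq, hqm, hd⟩ := exists_legDigit_ne (i.2.trans_le hnm) (i'.2.trans_le hnm) hmod.1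
        (fun h => hii' (Fin.ext h))
      exact absurd (h (q + 2) (by omega)) (palmColorDist_ne_of_legDigit_ne i i' j hq hqm hd)

/-- If `n ≤ 4 * 3 ^ m`, then the palm with `n` legs of length `4 * m + 3` has a locating coloring
with `m + 3` colors. -/
lemma isLocatingColoring_palmColor (hn : 2 ≤ n) (hnm : n ≤ 4 * 3 ^ m) :
    IsLocatingColoring (Palm n fun _ => 4 * m + 3)
      fun u => (⟨palmColor u, palmColor_lt u⟩ : Fin (m + 3)) := by
  refine ⟨fun u v huv heq => ?_, fun u v huv => ?_⟩
  · have heq : palmColor u = palmColor v := congrArg Fin.val heq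
    have hhub (i : Fin n) (j : Fin (4 * m + 3)) (h : (j : ℕ) = 0) :
        palmColor (palmLeg i j : PalmVert n fun _ => 4 * m + 3) ≠ 0 := by
      have hj : j = 0 := Fin.ext h
      rw [hj, palmColor_leg_zero, baseColor]
      split_ifs <;> omega
    rcases u.eq_hub_or_leg with rfl | ⟨i, j, rfl⟩ <;>
    rcases v.eq_hub_or_leg with rfl | ⟨i', j', rfl⟩
    · exact huv.ne rfl
    · exact hhub i' j' ((palm_adj_hub_leg _ _).1 huv) heq.symm
    · exact hhub i j ((palm_adj_hub_leg _ _).1 huv.symm) heq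
    · obtain ⟨rfl, hj | hj⟩ := (palm_adj_leg_leg _ _ _ _).1 huv
      · rw [palmColor_leg, palmColor_leg, hj] at heq
        exact legColor_succ_ne _ _ heq.symm
      · rw [palmColor_leg, palmColor_leg, hj] at heq
        exact legColor_succ_ne _ _ heq
  · by_contra! h
    refine huv (eq_of_palmColorDist_eq hn hnm fun x hx => ?_)
    have hpre : (fun u : PalmVert n fun _ => 4 * m + 3 =>
        (⟨palmColor u, palmColor_lt u⟩ : Fin (m + 3))) ⁻¹' {⟨x, hx⟩} =
          {v | palmColor v = x} := by
      ext w
      simp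
    have := h ⟨x, hx⟩
    rwa [hpre] at this

end PalmColoring

lemma exists_le_four_mul_three_pow {n k : ℕ} (hn : 2 ≤ n)
    (hk : ⌈Real.logb 3 ((n : ℝ) / 4)⌉ + 3 ≤ (k : ℤ)) :
    ∃ m, k = m + 3 ∧ n ≤ 4 * 3 ^ m := by
  have hn' : (2 : ℝ) ≤ n := by exact_mod_cast hn
  have hceil : 0 ≤ ⌈Real.logb 3 ((n : ℝ) / 4)⌉ := by
    have hlog : (-1 : ℝ) < Real.logb 3 ((n : ℝ) / 4) := by
      rw [Real.lt_logb_iff_rpow_lt (by norm_num) (by positivity), Real.rpow_neg_one]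
      linarith
    have : (-1 : ℤ) < ⌈Real.logb 3 ((n : ℝ) / 4)⌉ := Int.lt_ceil.2 (by exact_mod_cast hlog)
    omega
  refine ⟨k - 3, by omega, ?_⟩
  have hle : Real.logb 3 ((n : ℝ) / 4) ≤ ((k - 3 : ℕ) : ℝ) := by
    have : ⌈Real.logb 3 ((n : ℝ) / 4)⌉ ≤ ((k - 3 : ℕ) : ℤ) := by omega
    exact_mod_cast Int.ceil_le.1 this
  rw [Real.logb_le_iff_le_rpow (by norm_num) (by positivity), Real.rpow_natCast] at hle
  have : (n : ℝ) ≤ 4 * 3 ^ (k - 3) := by linarith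
  exact_mod_cast this

/-- For every `n ≥ 2` and every integer `k` with
`⌈log_3(n/4)⌉ + 3 ≤ k ≤ n + 1`, there is a palm `G = S_n(a_1, …, a_n)` with `χ_L(G) = k`. -/
theorem exists_palm_locatingChromaticNumber_eq (n : ℕ) (hn : 2 ≤ n) (k : ℕ)
    (hk₁ : ⌈Real.logb 3 ((n : ℝ) / 4)⌉ + 3 ≤ (k : ℤ)) (hk₂ : k ≤ n + 1) :
    ∃ a : ℕ → ℕ, (∀ i, 1 ≤ i → i ≤ n → 1 ≤ a i) ∧
      locatingChromaticNumber (Palm n a) = k := by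
  obtain ⟨m, rfl, hnm⟩ := exists_le_four_mul_three_pow hn hk₁
  exact exists_locatingChromaticNumber_eq_of_isLocatingColoring hk₂ _ (fun _ => 4 * m + 3) rfl
    (fun _ _ _ => by omega) (isLocatingColoring_palmColor hn hnm)
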